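/- Let L > 0 and suppose (u1, u2, v1, v2) are smooth, L-periodic in x, and satisfy the four-component system: ∂ₜm1 + n2 g1 g2 + m1(f2 g2 + 2 f1 g1) = 0, ∂ₜm2 − n1 g1 g2 − m2(f1 g1 + 2 f2 g2) = 0, ∂ₜn1 − m2 f1 f2 − n1(f2 g2 + 2 f1 g1) = 0, ∂ₜn2 + m1 f1 f2 + n2(f1 g1 + 2 f2 g2) = 0. Then the quantity ρ̄₂(t) = (1/2) ∫₀ᴸ (m1 + n2)(f1 + g2)(x, t) dx is independent of t. -/

import Mathlib

/-- Partial derivative with respect to the first (space) variable. -/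
noncomputable def pX (f : ℝ × ℝ → ℝ) : ℝ × ℝ → ℝ :=
  fun p => deriv (fun x => f (x, p.2)) p.1

/-- Partial derivative with respect to the second (time) variable. -/
noncomputable def pT (f : ℝ × ℝ → ℝ) : ℝ × ℝ → ℝ :=
  fun p => deriv (fun t => f (p.1, t)) p.2

/-!
With `a = f2 + g1` and `q = f1 + g2` the definitions give `m1 + n2 = a - ∂ₓa` and
`m2 + n1 = q + ∂ₓq`. Since partial derivatives commute,
`(a - ∂ₓa) ∂ₜq = a ∂ₜ(q + ∂ₓq) - ∂ₓ(a ∂ₜq)`, so the density `ρ = (m1 + n2) q` satisfies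
`∂ₜρ = q ∂ₜ(m1 + n2) + a ∂ₜ(m2 + n1) - ∂ₓ(a ∂ₜq)`. The evolution equations turn the first two
terms into `∂ₓ(a q (f1 g1 + f2 g2))`. Thus `∂ₜρ = ∂ₓF` for an `x`-periodic flux `F`, and the
divergence theorem on `[0, L] × [t1, t2]` shows that the integral of `ρ` is conserved.
-/

open scoped ContDiff

section PartialDerivatives

variable {f g u v : ℝ × ℝ → ℝ} {p : ℝ × ℝ} {L : ℝ} {k n : ℕ∞ω}

theorem pX_eq_fderiv (hf : DifferentiableAt ℝ f p) : pX f p = fderiv ℝ f p (1, 0) :=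
  (hf.hasFDerivAt.comp_hasDerivAt p.1
    ((hasDerivAt_id p.1).prodMk (hasDerivAt_const p.1 p.2))).deriv

theorem pT_eq_fderiv (hf : DifferentiableAt ℝ f p) : pT f p = fderiv ℝ f p (0, 1) :=
  (hf.hasFDerivAt.comp_hasDerivAt p.2
    ((hasDerivAt_const p.2 p.1).prodMk (hasDerivAt_id p.2))).deriv

theorem pX_eq_fderiv_fun (hf : Differentiable ℝ f) : pX f = fun p ↦ fderiv ℝ f p (1, 0) :=
  funext fun p ↦ pX_eq_fderiv (hf p)

theorem pT_eq_fderiv_fun (hf : Differentiable ℝ f) : pT f = fun p ↦ fderiv ℝ f p (0, 1) :=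
  funext fun p ↦ pT_eq_fderiv (hf p)

theorem pX_add (hf : DifferentiableAt ℝ f p) (hg : DifferentiableAt ℝ g p) :
    pX (f + g) p = pX f p + pX g p := by
  rw [pX_eq_fderiv (hf.add hg), pX_eq_fderiv hf, pX_eq_fderiv hg, fderiv_add hf hg,
    add_apply]

theorem pX_sub (hf : DifferentiableAt ℝ f p) (hg : DifferentiableAt ℝ g p) :
    pX (f - g) p = pX f p - pX g p := by
  rw [pX_eq_fderiv (hf.sub hg), pX_eq_fderiv hf, pX_eq_fderiv hg, fderiv_sub hf hg,
    sub_apply]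

theorem pX_mul (hf : DifferentiableAt ℝ f p) (hg : DifferentiableAt ℝ g p) :
    pX (f * g) p = f p * pX g p + g p * pX f p := by
  simp [pX_eq_fderiv (hf.mul hg), pX_eq_fderiv hf, pX_eq_fderiv hg, fderiv_mul hf hg]

theorem pT_add (hf : DifferentiableAt ℝ f p) (hg : DifferentiableAt ℝ g p) :
    pT (f + g) p = pT f p + pT g p := by
  rw [pT_eq_fderiv (hf.add hg), pT_eq_fderiv hf, pT_eq_fderiv hg, fderiv_add hf hg,
    add_apply]

theorem pT_mul (hf : DifferentiableAt ℝ f p) (hg : DifferentiableAt ℝ g p) :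
    pT (f * g) p = f p * pT g p + g p * pT f p := by
  simp [pT_eq_fderiv (hf.mul hg), pT_eq_fderiv hf, pT_eq_fderiv hg, fderiv_mul hf hg]

theorem contDiff_pX (hf : ContDiff ℝ n f) (hkn : k + 1 ≤ n) : ContDiff ℝ k (pX f) := by
  have hdiff : Differentiable ℝ f := hf.differentiable (by rintro rfl; simp at hkn)
  rw [pX_eq_fderiv_fun hdiff]
  exact (hf.fderiv_right hkn).clm_apply contDiff_const

theorem contDiff_pT (hf : ContDiff ℝ n f) (hkn : k + 1 ≤ n) : ContDiff ℝ k (pT f) := by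
  have hdiff : Differentiable ℝ f := hf.differentiable (by rintro rfl; simp at hkn)
  rw [pT_eq_fderiv_fun hdiff]
  exact (hf.fderiv_right hkn).clm_apply contDiff_const

theorem differentiable_pX (hf : ContDiff ℝ 2 f) : Differentiable ℝ (pX f) :=
  (contDiff_pX hf one_add_one_eq_two.le).differentiable_one

theorem differentiable_pT (hf : ContDiff ℝ 2 f) : Differentiable ℝ (pT f) :=
  (contDiff_pT hf one_add_one_eq_two.le).differentiable_one

theorem pT_pX_comm (hf : ContDiff ℝ 2 f) : pT (pX f) = pX (pT f) := by
  have hdiff : Differentiable ℝ f := hf.differentiable two_ne_zero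
  have hfderiv : Differentiable ℝ (fderiv ℝ f) :=
    (hf.fderiv_right one_add_one_eq_two.le).differentiable_one
  ext p
  have hsymm : IsSymmSndFDerivAt ℝ f p := hf.contDiffAt.isSymmSndFDerivAt (by simp)
  rw [pT_eq_fderiv (differentiable_pX hf p), pX_eq_fderiv (differentiable_pT hf p),
    pX_eq_fderiv_fun hdiff, pT_eq_fderiv_fun hdiff,
    fderiv_clm_apply (hfderiv p) (by fun_prop), fderiv_clm_apply (hfderiv p) (by fun_prop)]
  simpa using hsymm (0, 1) (1, 0)

theorem pX_periodic (hf : ∀ x t, f (x + L, t) = f (x, t)) (x t : ℝ) :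
    pX f (x + L, t) = pX f (x, t) := by
  simpa only [pX, hf] using (deriv_comp_add_const (fun y ↦ f (y, t)) L x).symm

theorem pT_periodic (hf : ∀ x t, f (x + L, t) = f (x, t)) (x t : ℝ) :
    pT f (x + L, t) = pT f (x, t) := by
  simp only [pT, hf]

theorem add_pX_periodic (hu : ∀ x t, u (x + L, t) = u (x, t))
    (hv : ∀ x t, v (x + L, t) = v (x, t)) (x t : ℝ) :
    (u + pX v) (x + L, t) = (u + pX v) (x, t) := by
  simp only [Pi.add_apply, hu, pX_periodic hv]

theorem sub_pX_periodic (hu : ∀ x t, u (x + L, t) = u (x, t))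
    (hv : ∀ x t, v (x + L, t) = v (x, t)) (x t : ℝ) :
    (u - pX v) (x + L, t) = (u - pX v) (x, t) := by
  simp only [Pi.sub_apply, hu, pX_periodic hv]

theorem pX_add_pX (hu : Differentiable ℝ u) (hv : ContDiff ℝ 2 v) :
    pX (u + pX v) = (v + pX u) - (v - pX (pX v)) := by
  ext p
  simp only [pX_add (hu p) (differentiable_pX hv p), Pi.add_apply, Pi.sub_apply]
  ring

theorem pX_sub_pX (hu : Differentiable ℝ u) (hv : ContDiff ℝ 2 v) :
    pX (u - pX v) = (v - pX (pX v)) - (v - pX u) := by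
  ext p
  simp only [pX_sub (hu p) (differentiable_pX hv p), Pi.sub_apply]
  ring

theorem pT_sub_pX_mul (hf : ContDiff ℝ 2 f) (hg : ContDiff ℝ 2 g) :
    pT ((f - pX f) * g) p
      = g p * pT (f - pX f) p + f p * pT (g + pX g) p - pX (f * pT g) p := by
  have hdf : Differentiable ℝ f := hf.differentiable two_ne_zero
  have hdg : Differentiable ℝ g := hg.differentiable two_ne_zero
  rw [pT_mul ((hdf.sub (differentiable_pX hf)) p) (hdg p),
    pT_add (hdg p) (differentiable_pX hg p), pX_mul (hdf p) (differentiable_pT hg p),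
    pT_pX_comm hg, Pi.sub_apply]
  ring

end PartialDerivatives

theorem integral_eq_of_pT_eq_pX {a b : ℝ} {ρ F : ℝ × ℝ → ℝ}
    (hρ : Differentiable ℝ ρ) (hF : Differentiable ℝ F) (hFab : ∀ t, F (a, t) = F (b, t))
    (hcons : ∀ p, pT ρ p = pX F p) (t1 t2 : ℝ) :
    ∫ x in a..b, ρ (x, t1) = ∫ x in a..b, ρ (x, t2) := by
  have hdiv (p : ℝ × ℝ) : (-fderiv ℝ F p) (1, 0) + fderiv ℝ ρ p (0, 1) = 0 := by
    rw [neg_apply, ← pX_eq_fderiv (hF p), ← pT_eq_fderiv (hρ p), hcons, neg_add_cancel]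
  have hstokes := MeasureTheory.integral2_divergence_prod_of_hasFDerivAt
    (fun p ↦ -F p) ρ (fun p ↦ -fderiv ℝ F p) (fderiv ℝ ρ) a t1 b t2
    hF.continuous.neg.continuousOn hρ.continuous.continuousOn
    (fun p _ ↦ (hF p).hasFDerivAt.neg) (fun p _ ↦ (hρ p).hasFDerivAt)
    (by simp only [hdiv, MeasureTheory.integrableOn_zero])
  simp only [hdiv, hFab, intervalIntegral.integral_zero] at hstokes
  linarith

section ConservationLaw

variable {m1 m2 n1 n2 f1 f2 g1 g2 : ℝ × ℝ → ℝ} {p : ℝ × ℝ}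

/-- The flux `F` in the local conservation law `∂ₜρ = ∂ₓF` for the density
`ρ = (m1 + n2) (f1 + g2)`. -/
noncomputable def flux (f1 f2 g1 g2 : ℝ × ℝ → ℝ) : ℝ × ℝ → ℝ :=
  (f2 + g1) * (f1 + g2) * (f1 * g1 + f2 * g2) - (f2 + g1) * pT (f1 + g2)

theorem differentiable_flux (hf1 : ContDiff ℝ 2 f1) (hf2 : Differentiable ℝ f2)
    (hg1 : Differentiable ℝ g1) (hg2 : ContDiff ℝ 2 g2) :
    Differentiable ℝ (flux f1 f2 g1 g2) := by
  have hdf1 : Differentiable ℝ f1 := hf1.differentiable two_ne_zero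
  have hdg2 : Differentiable ℝ g2 := hg2.differentiable two_ne_zero
  have hpT : Differentiable ℝ (pT (f1 + g2)) := differentiable_pT (hf1.add hg2)
  unfold flux
  fun_prop

theorem flux_periodic {L : ℝ}
    (hf1 : ∀ x t, f1 (x + L, t) = f1 (x, t)) (hf2 : ∀ x t, f2 (x + L, t) = f2 (x, t))
    (hg1 : ∀ x t, g1 (x + L, t) = g1 (x, t)) (hg2 : ∀ x t, g2 (x + L, t) = g2 (x, t))
    (x t : ℝ) : flux f1 f2 g1 g2 (x + L, t) = flux f1 f2 g1 g2 (x, t) := by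
  have hpT : pT (f1 + g2) (x + L, t) = pT (f1 + g2) (x, t) :=
    pT_periodic (fun x t ↦ by simp only [Pi.add_apply, hf1, hg2]) x t
  simp only [flux, Pi.sub_apply, Pi.mul_apply, Pi.add_apply, hf1, hf2, hg1, hg2, hpT]

theorem pX_quartic_flux (hdf1 : DifferentiableAt ℝ f1 p) (hdf2 : DifferentiableAt ℝ f2 p)
    (hdg1 : DifferentiableAt ℝ g1 p) (hdg2 : DifferentiableAt ℝ g2 p)
    (hf1 : pX f1 p = n1 p - g2 p) (hf2 : pX f2 p = g1 p - n2 p)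
    (hg1 : pX g1 p = f2 p - m1 p) (hg2 : pX g2 p = m2 p - f1 p) :
    pX ((f2 + g1) * (f1 + g2) * (f1 * g1 + f2 * g2)) p
      = (f2 p + g1 p) * (m2 p * (f1 p * (f2 p + g1 p) + 2 * f2 p * g2 p)
          + n1 p * (g2 p * (f2 p + g1 p) + 2 * f1 p * g1 p))
        - (f1 p + g2 p) * (m1 p * (f2 p * (f1 p + g2 p) + 2 * f1 p * g1 p)
          + n2 p * (g1 p * (f1 p + g2 p) + 2 * f2 p * g2 p)) := by
  have ha := hdf2.add hdg1
  have hq := hdf1.add hdg2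
  have hfg1 := hdf1.mul hdg1
  have hfg2 := hdf2.mul hdg2
  rw [pX_mul (ha.mul hq) (hfg1.add hfg2), pX_mul ha hq, pX_add hfg1 hfg2, pX_mul hdf1 hdg1,
    pX_mul hdf2 hdg2, pX_add hdf2 hdg1, pX_add hdf1 hdg2, hf1, hf2, hg1, hg2]
  simp only [Pi.add_apply, Pi.mul_apply]
  ring

theorem m1_add_n2_eq (hdf2 : Differentiable ℝ f2) (hdg1 : Differentiable ℝ g1)
    (hf2 : pX f2 = g1 - n2) (hg1 : pX g1 = f2 - m1) :
    m1 + n2 = (f2 + g1) - pX (f2 + g1) := by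
  ext p
  simp only [Pi.add_apply, Pi.sub_apply, pX_add (hdf2 p) (hdg1 p), hf2, hg1]
  ring

theorem m2_add_n1_eq (hdf1 : Differentiable ℝ f1) (hdg2 : Differentiable ℝ g2)
    (hf1 : pX f1 = n1 - g2) (hg2 : pX g2 = m2 - f1) :
    m2 + n1 = (f1 + g2) + pX (f1 + g2) := by
  ext p
  simp only [Pi.add_apply, Pi.sub_apply, pX_add (hdf1 p) (hdg2 p), hf1, hg2]
  ring

/-- `hmn` is the sum of the evolution equations of `m1` and `n2`, and `hnm` that of the equations of
`m2` and `n1`. -/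
theorem pT_density_eq_pX_flux (hcf1 : ContDiff ℝ 2 f1) (hcf2 : ContDiff ℝ 2 f2)
    (hcg1 : ContDiff ℝ 2 g1) (hcg2 : ContDiff ℝ 2 g2)
    (hf1 : pX f1 = n1 - g2) (hf2 : pX f2 = g1 - n2)
    (hg1 : pX g1 = f2 - m1) (hg2 : pX g2 = m2 - f1)
    (hmn : pT (m1 + n2) p + m1 p * (f2 p * (f1 p + g2 p) + 2 * f1 p * g1 p)
      + n2 p * (g1 p * (f1 p + g2 p) + 2 * f2 p * g2 p) = 0)
    (hnm : pT (m2 + n1) p - m2 p * (f1 p * (f2 p + g1 p) + 2 * f2 p * g2 p)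
      - n1 p * (g2 p * (f2 p + g1 p) + 2 * f1 p * g1 p) = 0) :
    pT ((m1 + n2) * (f1 + g2)) p = pX (flux f1 f2 g1 g2) p := by
  have hdf1 : Differentiable ℝ f1 := hcf1.differentiable two_ne_zero
  have hdf2 : Differentiable ℝ f2 := hcf2.differentiable two_ne_zero
  have hdg1 : Differentiable ℝ g1 := hcg1.differentiable two_ne_zero
  have hdg2 : Differentiable ℝ g2 := hcg2.differentiable two_ne_zero
  have hpT : Differentiable ℝ (pT (f1 + g2)) := differentiable_pT (hcf1.add hcg2)
  have hρ : pT ((m1 + n2) * (f1 + g2)) p = (f1 + g2) p * pT (m1 + n2) p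
      + (f2 + g1) p * pT (m2 + n1) p - pX ((f2 + g1) * pT (f1 + g2)) p := by
    rw [m1_add_n2_eq hdf2 hdg1 hf2 hg1, m2_add_n1_eq hdf1 hdg2 hf1 hg2]
    exact pT_sub_pX_mul (hcf2.add hcg1) (hcf1.add hcg2)
  have hflux : pX (flux f1 f2 g1 g2) p
      = pX ((f2 + g1) * (f1 + g2) * (f1 * g1 + f2 * g2)) p - pX ((f2 + g1) * pT (f1 + g2)) p :=
    pX_sub (by fun_prop) (by fun_prop)
  rw [hρ, hflux, pX_quartic_flux (hdf1 p) (hdf2 p) (hdg1 p) (hdg2 p)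
    (congrFun hf1 p) (congrFun hf2 p) (congrFun hg1 p) (congrFun hg2 p),
    Pi.add_apply, Pi.add_apply]
  linear_combination (f1 p + g2 p) * hmn + (f2 p + g1 p) * hnm

theorem integral_density_eq {L : ℝ} (hcf1 : ContDiff ℝ 2 f1) (hcf2 : ContDiff ℝ 2 f2)
    (hcg1 : ContDiff ℝ 2 g1) (hcg2 : ContDiff ℝ 2 g2)
    (hpf1 : ∀ x t, f1 (x + L, t) = f1 (x, t)) (hpf2 : ∀ x t, f2 (x + L, t) = f2 (x, t))
    (hpg1 : ∀ x t, g1 (x + L, t) = g1 (x, t)) (hpg2 : ∀ x t, g2 (x + L, t) = g2 (x, t))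
    (hf1 : pX f1 = n1 - g2) (hf2 : pX f2 = g1 - n2)
    (hg1 : pX g1 = f2 - m1) (hg2 : pX g2 = m2 - f1)
    (hmn : ∀ p, pT m1 p + pT n2 p + m1 p * (f2 p * (f1 p + g2 p) + 2 * f1 p * g1 p)
      + n2 p * (g1 p * (f1 p + g2 p) + 2 * f2 p * g2 p) = 0)
    (hnm : ∀ p, pT m2 p + pT n1 p - m2 p * (f1 p * (f2 p + g1 p) + 2 * f2 p * g2 p)
      - n1 p * (g2 p * (f2 p + g1 p) + 2 * f1 p * g1 p) = 0) (t1 t2 : ℝ) :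
    ∫ x in (0:ℝ)..L, (m1 (x, t1) + n2 (x, t1)) * (f1 (x, t1) + g2 (x, t1))
      = ∫ x in (0:ℝ)..L, (m1 (x, t2) + n2 (x, t2)) * (f1 (x, t2) + g2 (x, t2)) := by
  have hdf1 : Differentiable ℝ f1 := hcf1.differentiable two_ne_zero
  have hdf2 : Differentiable ℝ f2 := hcf2.differentiable two_ne_zero
  have hdg1 : Differentiable ℝ g1 := hcg1.differentiable two_ne_zero
  have hdg2 : Differentiable ℝ g2 := hcg2.differentiable two_ne_zero
  have hdm1 : Differentiable ℝ m1 := by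
    simpa only [hg1, sub_sub_cancel] using hdf2.sub (differentiable_pX hcg1)
  have hdm2 : Differentiable ℝ m2 := by
    simpa only [hg2, sub_add_cancel] using (differentiable_pX hcg2).add hdf1
  have hdn1 : Differentiable ℝ n1 := by
    simpa only [hf1, sub_add_cancel] using (differentiable_pX hcf1).add hdg2
  have hdn2 : Differentiable ℝ n2 := by
    simpa only [hf2, sub_sub_cancel] using hdg1.sub (differentiable_pX hcf2)
  have hflux (t : ℝ) : flux f1 f2 g1 g2 (0, t) = flux f1 f2 g1 g2 (L, t) := by
    simpa only [zero_add] using (flux_periodic hpf1 hpf2 hpg1 hpg2 0 t).symm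
  refine integral_eq_of_pT_eq_pX (ρ := (m1 + n2) * (f1 + g2)) (by fun_prop)
    (differentiable_flux hcf1 hdf2 hdg1 hcg2) hflux (fun p ↦ ?_) t1 t2
  apply pT_density_eq_pX_flux hcf1 hcf2 hcg1 hcg2 hf1 hf2 hg1 hg2
  · rw [pT_add (hdm1 p) (hdn2 p), hmn]
  · rw [pT_add (hdm2 p) (hdn1 p), hnm]

end ConservationLaw

theorem stmt_17_general
    (L : ℝ) (u1 u2 v1 v2 : ℝ × ℝ → ℝ)
    (hu1 : ContDiff ℝ 3 u1) (hu2 : ContDiff ℝ 3 u2)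
    (hv1 : ContDiff ℝ 3 v1) (hv2 : ContDiff ℝ 3 v2)
    (hperu1 : ∀ x t : ℝ, u1 (x + L, t) = u1 (x, t))
    (hperu2 : ∀ x t : ℝ, u2 (x + L, t) = u2 (x, t))
    (hperv1 : ∀ x t : ℝ, v1 (x + L, t) = v1 (x, t))
    (hperv2 : ∀ x t : ℝ, v2 (x + L, t) = v2 (x, t))
    (m1 m2 n1 n2 f1 f2 g1 g2 : ℝ × ℝ → ℝ)
    (hm1 : m1 = u1 - pX (pX u1)) (hm2 : m2 = u2 - pX (pX u2))
    (hn1 : n1 = v1 - pX (pX v1)) (hn2 : n2 = v2 - pX (pX v2))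
    (hf1 : f1 = u2 - pX v1) (hf2 : f2 = u1 + pX v2)
    (hg1 : g1 = v2 + pX u1) (hg2 : g2 = v1 - pX u2)
    (hmn : ∀ p, pT m1 p + pT n2 p + m1 p * (f2 p * (f1 p + g2 p) + 2 * f1 p * g1 p)
      + n2 p * (g1 p * (f1 p + g2 p) + 2 * f2 p * g2 p) = 0)
    (hnm : ∀ p, pT m2 p + pT n1 p - m2 p * (f1 p * (f2 p + g1 p) + 2 * f2 p * g2 p)
      - n1 p * (g2 p * (f2 p + g1 p) + 2 * f1 p * g1 p) = 0)
    (t1 t2 : ℝ) :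
    ((1 : ℝ) / 2) * (∫ x in (0:ℝ)..L,
        (m1 (x, t1) + n2 (x, t1)) * (f1 (x, t1) + g2 (x, t1)))
      = ((1 : ℝ) / 2) * ∫ x in (0:ℝ)..L,
          (m1 (x, t2) + n2 (x, t2)) * (f1 (x, t2) + g2 (x, t2)) := by
  subst hm1 hm2 hn1 hn2 hf1 hf2 hg1 hg2
  have hle : (2 : ℕ∞ω) ≤ 3 := by norm_num
  have hsub {u v : ℝ × ℝ → ℝ} (hu : ContDiff ℝ 3 u) (hv : ContDiff ℝ 3 v) :
      ContDiff ℝ 2 (u - pX v) := (hu.of_le hle).sub (contDiff_pX hv two_add_one_eq_three.le)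
  have hadd {u v : ℝ × ℝ → ℝ} (hu : ContDiff ℝ 3 u) (hv : ContDiff ℝ 3 v) :
      ContDiff ℝ 2 (u + pX v) := (hu.of_le hle).add (contDiff_pX hv two_add_one_eq_three.le)
  have hdiff {u : ℝ × ℝ → ℝ} (hu : ContDiff ℝ 3 u) : Differentiable ℝ u :=
    hu.differentiable three_ne_zero
  exact congrArg _ (integral_density_eq
    (hsub hu2 hv1) (hadd hu1 hv2) (hadd hv2 hu1) (hsub hv1 hu2)
    (sub_pX_periodic hperu2 hperv1) (add_pX_periodic hperu1 hperv2)
    (add_pX_periodic hperv2 hperu1) (sub_pX_periodic hperv1 hperu2)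
    (pX_sub_pX (hdiff hu2) (hv1.of_le hle)) (pX_add_pX (hdiff hu1) (hv2.of_le hle))
    (pX_add_pX (hdiff hv2) (hu1.of_le hle)) (pX_sub_pX (hdiff hv1) (hu2.of_le hle))
    hmn hnm t1 t2)

theorem stmt_17
    (L : ℝ) (hL : 0 < L)
    (u1 u2 v1 v2 : ℝ × ℝ → ℝ)
    (hu1 : ContDiff ℝ (⊤ : ℕ∞) u1) (hu2 : ContDiff ℝ (⊤ : ℕ∞) u2)
    (hv1 : ContDiff ℝ (⊤ : ℕ∞) v1) (hv2 : ContDiff ℝ (⊤ : ℕ∞) v2)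
    (hperu1 : ∀ x t : ℝ, u1 (x + L, t) = u1 (x, t))
    (hperu2 : ∀ x t : ℝ, u2 (x + L, t) = u2 (x, t))
    (hperv1 : ∀ x t : ℝ, v1 (x + L, t) = v1 (x, t))
    (hperv2 : ∀ x t : ℝ, v2 (x + L, t) = v2 (x, t))
    (m1 m2 n1 n2 f1 f2 g1 g2 : ℝ × ℝ → ℝ)
    (hm1 : m1 = fun p => u1 p - pX (pX u1) p)
    (hm2 : m2 = fun p => u2 p - pX (pX u2) p)
    (hn1 : n1 = fun p => v1 p - pX (pX v1) p)
    (hn2 : n2 = fun p => v2 p - pX (pX v2) p)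
    (hf1 : f1 = fun p => u2 p - pX v1 p)
    (hf2 : f2 = fun p => u1 p + pX v2 p)
    (hg1 : g1 = fun p => v2 p + pX u1 p)
    (hg2 : g2 = fun p => v1 p - pX u2 p)
    (hsys : ∀ p : ℝ × ℝ,
        pT m1 p + n2 p * g1 p * g2 p + m1 p * (f2 p * g2 p + 2 * f1 p * g1 p) = 0 ∧
        pT m2 p - n1 p * g1 p * g2 p - m2 p * (f1 p * g1 p + 2 * f2 p * g2 p) = 0 ∧
        pT n1 p - m2 p * f1 p * f2 p - n1 p * (f2 p * g2 p + 2 * f1 p * g1 p) = 0 ∧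
        pT n2 p + m1 p * f1 p * f2 p + n2 p * (f1 p * g1 p + 2 * f2 p * g2 p) = 0) :
    ∀ t1 t2 : ℝ,
      ((1 : ℝ) / 2) * (∫ x in (0:ℝ)..L,
          (m1 (x, t1) + n2 (x, t1)) * (f1 (x, t1) + g2 (x, t1)))
        = ((1 : ℝ) / 2) * ∫ x in (0:ℝ)..L,
            (m1 (x, t2) + n2 (x, t2)) * (f1 (x, t2) + g2 (x, t2)) := by
  have h3 {u : ℝ × ℝ → ℝ} (hu : ContDiff ℝ (⊤ : ℕ∞) u) : ContDiff ℝ 3 u := contDiff_infty.mp hu 3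
  exact stmt_17_general L u1 u2 v1 v2 (h3 hu1) (h3 hu2) (h3 hv1) (h3 hv2)
    hperu1 hperu2 hperv1 hperv2 m1 m2 n1 n2 f1 f2 g1 g2 hm1 hm2 hn1 hn2 hf1 hf2 hg1 hg2
    (fun p ↦ by linear_combination (hsys p).1 + (hsys p).2.2.2)
    (fun p ↦ by linear_combination (hsys p).2.1 + (hsys p).2.2.1)
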